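/- (Poincaré-type inequality on a thin overlap region, Proposition 1 of the paper.) There exists a constant c > 0, independent of φ, ζ, x_M, d_o and h, such that for every x_M > 0, every h > 0, every d_o with 0 < d_o ≤ h, every continuous ζ: [0, x_M] → ℝ with 0 < ζ(x) ≤ d_o, and every function φ that is C¹ on a neighborhood of the closure of Ω_o, one has ∫_{Ω_o} φ(x,y)² d(x,y) ≤ c · d_o · h · ( ∫_{Ω_o} |∇φ(x,y)|² d(x,y) + (1/h) ∫_0^{x_M} φ(x,ζ(x))² dx ). -/

import Mathlib

/-!
The inequality is one-dimensional in `y`, integrated over `x`. On each vertical segment,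
integrating `(y φ²)' = φ² + 2 y φ φ_y ≥ φ² / 2 - 2 y² φ_y²` over `(0, ζ x)` gives
`∫ φ² ≤ 2 ζ(x) φ(x, ζ x)² + 4 ζ(x)² ∫ φ_y²` (`segment_bound`). Fubini on the region under the
graph (`setIntegral_ovl`), together with `ζ ≤ d_o ≤ h` and `φ_y² ≤ |∇φ|²`, yields the claim with
`c = 4`. All integrands are bounded, since the closure of the region is compact.
-/

open MeasureTheory Set

/-- Partial derivative of `φ : ℝ × ℝ → ℝ` with respect to the first variable. -/
noncomputable def pdx (φ : ℝ × ℝ → ℝ) (p : ℝ × ℝ) : ℝ :=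
  deriv (fun t => φ (t, p.2)) p.1

/-- Partial derivative of `φ : ℝ × ℝ → ℝ` with respect to the second variable. -/
noncomputable def pdy (φ : ℝ × ℝ → ℝ) (p : ℝ × ℝ) : ℝ :=
  deriv (fun t => φ (p.1, t)) p.2

/-- Squared Euclidean norm of the gradient of `φ : ℝ × ℝ → ℝ`. -/
noncomputable def gradSq (φ : ℝ × ℝ → ℝ) (p : ℝ × ℝ) : ℝ :=
  (pdx φ p) ^ 2 + (pdy φ p) ^ 2

/-- The two-dimensional overlap region under the graph of `ζ`. -/
def ovl (xM : ℝ) (ζ : ℝ → ℝ) : Set (ℝ × ℝ) :=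
  {p : ℝ × ℝ | 0 < p.1 ∧ p.1 < xM ∧ 0 < p.2 ∧ p.2 < ζ p.1}

/-- Trace inequality on a segment: an `L²` bound by the right endpoint value and the derivative. -/
lemma segment_bound {g g' : ℝ → ℝ} {z : ℝ} (hz : 0 < z)
    (hg : ∀ y ∈ Icc 0 z, HasDerivAt g (g' y) y) (hg' : ContinuousOn g' (Icc 0 z)) :
    ∫ y in Ioo 0 z, g y ^ 2 ≤ 2 * z * g z ^ 2 + 4 * z ^ 2 * ∫ y in Ioo 0 z, g' y ^ 2 := by
  have hgc : ContinuousOn g (Icc 0 z) := fun y hy => (hg y hy).continuousAt.continuousWithinAt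
  have hu : uIcc 0 z = Icc 0 z := uIcc_of_le hz.le
  have hi1 : IntervalIntegrable (fun y => g y ^ 2) volume 0 z :=
    ContinuousOn.intervalIntegrable (by rw [hu]; exact hgc.pow 2)
  have hi2 : IntervalIntegrable (fun y => g' y ^ 2) volume 0 z :=
    ContinuousOn.intervalIntegrable (by rw [hu]; exact hg'.pow 2)
  have hi3 : IntervalIntegrable (fun y => g y ^ 2 + y * (2 * g y * g' y)) volume 0 z :=
    ContinuousOn.intervalIntegrable (by rw [hu]; fun_prop)
  have hftc : ∫ y in (0 : ℝ)..z, (g y ^ 2 + y * (2 * g y * g' y)) = z * g z ^ 2 := by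
    rw [intervalIntegral.integral_eq_sub_of_hasDerivAt (f := fun y => y * g y ^ 2) _ hi3]
    · simp
    · intro y hy
      rw [hu] at hy
      have := (hasDerivAt_id y).mul ((hg y hy).pow 2)
      refine this.congr_deriv ?_
      simp
  have hmono : ∫ y in (0 : ℝ)..z, ((1 / 2) * g y ^ 2 - 2 * z ^ 2 * g' y ^ 2)
      ≤ ∫ y in (0 : ℝ)..z, (g y ^ 2 + y * (2 * g y * g' y)) := by
    refine intervalIntegral.integral_mono_on hz.le
      ((hi1.const_mul _).sub (hi2.const_mul _)) hi3 fun y hy => ?_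
    have hyz : y ^ 2 ≤ z ^ 2 := pow_le_pow_left₀ hy.1 hy.2 2
    nlinarith [sq_nonneg (g y + 2 * y * g' y), mul_le_mul_of_nonneg_right hyz (sq_nonneg (g' y))]
  rw [intervalIntegral.integral_sub (hi1.const_mul _) (hi2.const_mul _),
    intervalIntegral.integral_const_mul, intervalIntegral.integral_const_mul, hftc] at hmono
  rw [← integral_Ioc_eq_integral_Ioo, ← integral_Ioc_eq_integral_Ioo,
    ← intervalIntegral.integral_of_le hz.le, ← intervalIntegral.integral_of_le hz.le]
  linarith

lemma isOpen_ovl {xM : ℝ} {ζ : ℝ → ℝ} (hζ : ContinuousOn ζ (Icc 0 xM)) :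
    IsOpen (ovl xM ζ) := by
  have hs : IsOpen (Ioo 0 xM ×ˢ Ioi (0 : ℝ)) := isOpen_Ioo.prod isOpen_Ioi
  have hc : ContinuousOn (fun p : ℝ × ℝ => ζ p.1 - p.2) (Ioo 0 xM ×ˢ Ioi (0 : ℝ)) :=
    (hζ.comp continuousOn_fst fun p hp => Ioo_subset_Icc_self hp.1).sub continuousOn_snd
  convert hc.isOpen_inter_preimage hs isOpen_Ioi (t := Ioi 0) using 1
  ext p
  simp [ovl, and_assoc]

lemma isCompact_closure_ovl {xM dO : ℝ} {ζ : ℝ → ℝ} (hb : ∀ x ∈ Icc 0 xM, 0 < ζ x ∧ ζ x ≤ dO) :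
    IsCompact (closure (ovl xM ζ)) := by
  refine (isCompact_Icc.prod isCompact_Icc : IsCompact (Icc 0 xM ×ˢ Icc 0 dO)).closure_of_subset ?_
  rintro p ⟨h1, h2, h3, h4⟩
  exact ⟨⟨h1.le, h2.le⟩, h3.le, h4.le.trans (hb _ ⟨h1.le, h2.le⟩).2⟩

lemma mem_closure_ovl {xM : ℝ} {ζ : ℝ → ℝ} {x y : ℝ} (hx : x ∈ Ioo 0 xM) (hz : 0 < ζ x)
    (hy : y ∈ Icc 0 (ζ x)) : (x, y) ∈ closure (ovl xM ζ) := by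
  have hsub : ({x} : Set ℝ) ×ˢ Ioo 0 (ζ x) ⊆ ovl xM ζ := by
    rintro ⟨a, b⟩ ⟨rfl, hb⟩
    exact ⟨hx.1, hx.2, hb.1, hb.2⟩
  refine closure_mono hsub ?_
  rw [closure_prod_eq, closure_singleton, closure_Ioo hz.ne]
  exact ⟨rfl, hy⟩

/-- Fubini on the region under the graph of `ζ`. -/
lemma setIntegral_ovl {xM dO : ℝ} {ζ : ℝ → ℝ} (hζ : ContinuousOn ζ (Icc 0 xM))
    (hb : ∀ x ∈ Icc 0 xM, 0 < ζ x ∧ ζ x ≤ dO) {f : ℝ × ℝ → ℝ}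
    (hf : ContinuousOn f (closure (ovl xM ζ))) :
    IntegrableOn f (ovl xM ζ) ∧
    IntegrableOn (fun x => ∫ y in Ioo 0 (ζ x), f (x, y)) (Ioo 0 xM) ∧
    ∫ p in ovl xM ζ, f p = ∫ x in Ioo 0 xM, ∫ y in Ioo 0 (ζ x), f (x, y) := by
  have hm : MeasurableSet (ovl xM ζ) := (isOpen_ovl hζ).measurableSet
  have hint : IntegrableOn f (ovl xM ζ) :=
    (hf.integrableOn_compact (isCompact_closure_ovl hb)).mono_set subset_closure
  have hind : Integrable ((ovl xM ζ).indicator f) (volume.prod volume) :=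
    hint.integrable_indicator hm
  have hinner : (fun x => ∫ y, (ovl xM ζ).indicator f (x, y)) =
      (Ioo 0 xM).indicator fun x => ∫ y in Ioo 0 (ζ x), f (x, y) := by
    funext x
    by_cases hx : x ∈ Ioo 0 xM
    · rw [indicator_of_mem hx, ← integral_indicator measurableSet_Ioo]
      congr 1
      funext y
      by_cases hy : y ∈ Ioo 0 (ζ x)
      · rw [indicator_of_mem hy, indicator_of_mem]
        exact ⟨hx.1, hx.2, hy.1, hy.2⟩
      · rw [indicator_of_notMem hy, indicator_of_notMem]
        exact fun h => hy h.2.2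
    · rw [indicator_of_notMem hx]
      have : ∀ y, (ovl xM ζ).indicator f (x, y) = 0 := fun y =>
        indicator_of_notMem (fun h => hx ⟨h.1, h.2.1⟩) _
      simp [this]
  refine ⟨hint, ?_, ?_⟩
  · rw [← integrable_indicator_iff measurableSet_Ioo, ← hinner]
    exact hind.integral_prod_left
  · rw [← integral_indicator hm, ← integral_indicator measurableSet_Ioo, ← hinner]
    exact integral_prod _ hind

/-- Poincaré-type inequality on a thin overlap region,
Proposition 1 of the paper. There is a universal constant `c > 0` such that
`∫_{Ω_o} φ² ≤ c d_o h ( ∫_{Ω_o} |∇φ|² + (1/h) ∫_0^{x_M} φ(x,ζ(x))² dx )`. -/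
theorem poincare_thin_overlap :
    ∃ c : ℝ, 0 < c ∧
      ∀ (xM h dO : ℝ), 0 < xM → 0 < h → 0 < dO → dO ≤ h →
      ∀ ζ : ℝ → ℝ, ContinuousOn ζ (Icc 0 xM) →
        (∀ x ∈ Icc 0 xM, 0 < ζ x ∧ ζ x ≤ dO) →
      ∀ (U : Set (ℝ × ℝ)), IsOpen U → closure (ovl xM ζ) ⊆ U →
      ∀ φ : ℝ × ℝ → ℝ, ContDiffOn ℝ 1 φ U →
        (∫ p in ovl xM ζ, (φ p) ^ 2) ≤
          c * dO * h * ((∫ p in ovl xM ζ, gradSq φ p) +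
            (1 / h) * ∫ x in Ioo (0 : ℝ) xM, (φ (x, ζ x)) ^ 2) := by
  refine ⟨4, by norm_num, ?_⟩
  intro xM h dO hxM hh hdO hle ζ hζ hb U hU hcl φ hφ
  have hd : ∀ p ∈ U, HasFDerivAt φ (fderiv ℝ φ p) p := fun p hp =>
    ((hφ.contDiffAt (hU.mem_nhds hp)).differentiableAt (by norm_num)).hasFDerivAt
  have hdy : ∀ p ∈ U, HasDerivAt (fun t => φ (p.1, t)) (fderiv ℝ φ p (0, 1)) p.2 := fun p hp =>
    (hd p hp).comp_hasDerivAt p.2 ((hasDerivAt_const p.2 p.1).prodMk (hasDerivAt_id p.2))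
  have hdx : ∀ p ∈ U, HasDerivAt (fun t => φ (t, p.2)) (fderiv ℝ φ p (1, 0)) p.1 := fun p hp =>
    (hd p hp).comp_hasDerivAt p.1 ((hasDerivAt_id p.1).prodMk (hasDerivAt_const p.1 p.2))
  have hfc : ContinuousOn (fderiv ℝ φ) U := hφ.continuousOn_fderiv_of_isOpen hU le_rfl
  have hcy : ContinuousOn (pdy φ) (closure (ovl xM ζ)) :=
    ((hfc.clm_apply continuousOn_const).congr fun p hp => (hdy p hp).deriv).mono hcl
  have hcx : ContinuousOn (pdx φ) (closure (ovl xM ζ)) :=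
    ((hfc.clm_apply continuousOn_const).congr fun p hp => (hdx p hp).deriv).mono hcl
  have hcφ : ContinuousOn φ (closure (ovl xM ζ)) := hφ.continuousOn.mono hcl
  obtain ⟨-, hφi, hφe⟩ := setIntegral_ovl hζ hb (hcφ.pow 2)
  obtain ⟨hyI, hyi, hye⟩ := setIntegral_ovl hζ hb (hcy.pow 2)
  obtain ⟨hgI, -, -⟩ := setIntegral_ovl (f := gradSq φ) hζ hb ((hcx.pow 2).add (hcy.pow 2))
  simp only [Pi.pow_apply] at hφi hφe hyI hyi hye
  have hmem : ∀ x ∈ Ioo 0 xM, (x, ζ x) ∈ closure (ovl xM ζ) := fun x hx =>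
    have hz := (hb x (Ioo_subset_Icc_self hx)).1
    mem_closure_ovl hx hz ⟨hz.le, le_rfl⟩
  have hti : IntegrableOn (fun x => φ (x, ζ x) ^ 2) (Ioo 0 xM) := by
    obtain ⟨C, hC⟩ := (isCompact_closure_ovl hb).exists_bound_of_continuousOn (hcφ.pow 2)
    have hc : ContinuousOn (fun x => φ (x, ζ x) ^ 2) (Ioo 0 xM) :=
      (hcφ.comp (continuousOn_id.prodMk (hζ.mono Ioo_subset_Icc_self)) hmem).pow 2
    refine IntegrableOn.of_bound (by simp) (hc.aestronglyMeasurable measurableSet_Ioo) C ?_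
    exact (ae_restrict_mem measurableSet_Ioo).mono fun x hx => hC _ (hmem x hx)
  have hkey : ∫ x in Ioo 0 xM, ∫ y in Ioo 0 (ζ x), φ (x, y) ^ 2 ≤
      ∫ x in Ioo 0 xM, (2 * dO * φ (x, ζ x) ^ 2 +
        4 * dO ^ 2 * ∫ y in Ioo 0 (ζ x), pdy φ (x, y) ^ 2) := by
    refine setIntegral_mono_on hφi ((hti.const_mul _).add (hyi.const_mul _)) measurableSet_Ioo ?_
    intro x hx
    obtain ⟨hz, hzd⟩ := hb x (Ioo_subset_Icc_self hx)
    have hseg := fun y (hy : y ∈ Icc 0 (ζ x)) => mem_closure_ovl hx hz hy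
    refine (segment_bound (g := fun y => φ (x, y)) (g' := fun y => pdy φ (x, y)) hz
      (fun y hy => ?_) ?_).trans ?_
    · exact (hdy _ (hcl (hseg y hy))).differentiableAt.hasDerivAt
    · exact hcy.comp (continuousOn_const.prodMk continuousOn_id) hseg
    · have : 0 ≤ ∫ y in Ioo 0 (ζ x), pdy φ (x, y) ^ 2 := integral_nonneg fun y => sq_nonneg _
      gcongr
  rw [integral_add (hti.const_mul _) (hyi.const_mul _), integral_const_mul, integral_const_mul,
    ← hφe, ← hye] at hkey
  have hgrad : ∫ p in ovl xM ζ, pdy φ p ^ 2 ≤ ∫ p in ovl xM ζ, gradSq φ p :=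
    integral_mono hyI hgI fun p => le_add_of_nonneg_left (sq_nonneg _)
  have hG : 0 ≤ ∫ p in ovl xM ζ, pdy φ p ^ 2 := integral_nonneg fun y => sq_nonneg _
  have hT : 0 ≤ ∫ x in Ioo 0 xM, φ (x, ζ x) ^ 2 := integral_nonneg fun y => sq_nonneg _
  set A := ∫ p in ovl xM ζ, pdy φ p ^ 2
  set B := ∫ p in ovl xM ζ, gradSq φ p
  set T := ∫ x in Ioo 0 xM, φ (x, ζ x) ^ 2
  have h1 : 4 * dO ^ 2 * A ≤ 4 * (dO * h) * B := by
    have : dO ^ 2 ≤ dO * h := by nlinarith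
    gcongr
  have h2 : 4 * dO * h * (B + 1 / h * T) = 4 * (dO * h) * B + 4 * dO * T := by
    field_simp
  rw [h2]
  nlinarith [mul_nonneg hdO.le hT]
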